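/- Let a : 𝒲 → ℝ satisfy a(u) > 0 for all u ∈ 𝒲 and Σ_{u∈𝒲} a(u)/g(∅,u) < ∞ (equivalently Σ_{u∈𝒲} a(u)/m(u) < ∞). Then for all v, w ∈ 𝒲 the series ρ(v,w) := Σ_{u∈𝒲} a(u)·|k(u,v) − k(u,w)| converges, and ρ is a metric on 𝒲: ρ(v,w) ≥ 0 with ρ(v,w) = 0 if and only if v = w, ρ(v,w) = ρ(w,v), and ρ(v,w) ≤ ρ(v,x) + ρ(x,w) for all x ∈ 𝒲. -/

import Mathlib

open Classical

namespace Martin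

/-- Finite words over the alphabet `Fin N` (the empty list is the empty word `∅`;
`w ++ [i]` is the word `wi` and `w.dropLast` is the parent `w⁻`). -/
abbrev Word (N : ℕ) := List (Fin N)

/-- The mass of a word: `m(w₁⋯wₙ) = m(w₁)⋯m(wₙ)`, `m(∅) = 1`. -/
noncomputable def mW {N : ℕ} (m : Fin N → ℝ) (w : Word N) : ℝ := (w.map m).prod

/-- Total mass of the equivalence class of `v`: `Σ_{v̂ ∼ v} m(v̂)`. -/
noncomputable def massCl {N : ℕ} (sim : Word N → Word N → Prop) (m : Fin N → ℝ)
    (v : Word N) : ℝ :=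
  ∑ᶠ u ∈ {u : Word N | sim u v}, mW m u

/-- Transition probability: `p(v,w) = m(w)/(Σ_{v̂∼v} m(v̂))` if `w = v̂i` for some
`v̂ ∼ v`, `i ∈ 𝒜`, and `0` otherwise. -/
noncomputable def pTrans {N : ℕ} (sim : Word N → Word N → Prop) (m : Fin N → ℝ)
    (v w : Word N) : ℝ :=
  if ∃ v' : Word N, ∃ i : Fin N, sim v' v ∧ w = v' ++ [i] then mW m w / massCl sim m v
  else 0

/-- `n`-step transition probabilities: `p₀(v,w) = δ_v(w)`,
`pₙ(v,w) = Σ_u pₙ₋₁(v,u) p(u,w)`. -/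
noncomputable def pn {N : ℕ} (sim : Word N → Word N → Prop) (m : Fin N → ℝ) :
    ℕ → Word N → Word N → ℝ
  | 0, v, w => if w = v then 1 else 0
  | n + 1, v, w => ∑ᶠ u : Word N, pn sim m n v u * pTrans sim m u w

/-- The Green function `g(v,w) = p_{|w|−|v|}(v,w)` (it equals `0` when `|w| < |v|`,
by truncated subtraction and since then `v ≠ w`). -/
noncomputable def green {N : ℕ} (sim : Word N → Word N → Prop) (m : Fin N → ℝ)
    (v w : Word N) : ℝ :=
  pn sim m (w.length - v.length) v w

/-- The function `q(v,w) = g(v,w)·(Σ_{v̂∼v} m(v̂))/m(w)` for `v ≠ w`, `q(v,v) = 1`. -/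
noncomputable def qfun {N : ℕ} (sim : Word N → Word N → Prop) (m : Fin N → ℝ)
    (v w : Word N) : ℝ :=
  if v = w then 1 else green sim m v w * massCl sim m v / mW m w

/-- The Martin kernel `k(v,w) = g(v,w)/g(∅,w)`. -/
noncomputable def mkernel {N : ℕ} (sim : Word N → Word N → Prop) (m : Fin N → ℝ)
    (v w : Word N) : ℝ :=
  green sim m v w / green sim m [] w

/-- `R(w)`: the number of words equivalent to `w`. -/
noncomputable def Rnum {N : ℕ} (sim : Word N → Word N → Prop) (w : Word N) : ℕ :=
  Set.ncard {u : Word N | sim u w}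

/-- Assumption (B2): for every word `w`, either all equivalent words have the same mass,
or all equivalent words have equivalent parents. -/
def B2 {N : ℕ} (sim : Word N → Word N → Prop) (m : Fin N → ℝ) : Prop :=
  ∀ w : Word N, (∀ w', sim w' w → mW m w' = mW m w) ∨
    (∀ w', sim w' w → sim w'.dropLast w.dropLast)


/-- The Martin metric `ρ(v,w) = Σ_{u∈𝒲} a(u)·|k(u,v) − k(u,w)|`. -/
noncomputable def rho {N : ℕ} (sim : Word N → Word N → Prop) (m : Fin N → ℝ)
    (a : Word N → ℝ) (v w : Word N) : ℝ :=
  ∑' u : Word N, a u * |mkernel sim m u v - mkernel sim m u w|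

lemma mW_pos {N : ℕ} {m : Fin N → ℝ} (hm : ∀ a, m a ∈ Set.Ioo (0 : ℝ) 1) (w : Word N) :
    0 < mW m w := by
  unfold mW
  apply List.prod_pos
  intro x hx
  obtain ⟨b, _, rfl⟩ := List.mem_map.1 hx
  exact (hm b).1

lemma fin_len {N : ℕ} (n : ℕ) : {u : Word N | u.length = n}.Finite :=
  List.finite_length_eq (Fin N) n

lemma massCl_pos {N : ℕ} {sim : Word N → Word N → Prop} (hsim : Equivalence sim)
    (hlen : ∀ v w : Word N, sim v w → v.length = w.length)
    {m : Fin N → ℝ} (hm : ∀ a, m a ∈ Set.Ioo (0 : ℝ) 1) (v : Word N) :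
    0 < massCl sim m v := by
  have hf : {u : Word N | sim u v}.Finite := (fin_len v.length).subset fun u hu => hlen u v hu
  unfold massCl
  rw [finsum_mem_eq_finite_toFinset_sum _ hf]
  apply Finset.sum_pos
  · intro u _
    exact mW_pos hm u
  · exact ⟨v, by simpa using hsim.refl v⟩

lemma pTrans_nonneg {N : ℕ} {sim : Word N → Word N → Prop} (hsim : Equivalence sim)
    (hlen : ∀ v w : Word N, sim v w → v.length = w.length)
    {m : Fin N → ℝ} (hm : ∀ a, m a ∈ Set.Ioo (0 : ℝ) 1) (v w : Word N) :
    0 ≤ pTrans sim m v w := by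
  unfold pTrans
  split_ifs
  · exact (div_pos (mW_pos hm w) (massCl_pos hsim hlen hm v)).le
  · exact le_rfl

lemma pn_nonneg {N : ℕ} {sim : Word N → Word N → Prop} (hsim : Equivalence sim)
    (hlen : ∀ v w : Word N, sim v w → v.length = w.length)
    {m : Fin N → ℝ} (hm : ∀ a, m a ∈ Set.Ioo (0 : ℝ) 1) (n : ℕ) (v w : Word N) :
    0 ≤ pn sim m n v w := by
  induction n generalizing w with
  | zero => unfold pn; split_ifs <;> norm_num
  | succ n ih =>
    unfold pn
    exact finsum_nonneg fun u => mul_nonneg (ih u) (pTrans_nonneg hsim hlen hm u w)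

lemma pn_pos {N : ℕ} {sim : Word N → Word N → Prop} (hsim : Equivalence sim)
    (hlen : ∀ v w : Word N, sim v w → v.length = w.length)
    {m : Fin N → ℝ} (hm : ∀ a, m a ∈ Set.Ioo (0 : ℝ) 1) (w : Word N) :
    0 < pn sim m w.length [] w := by
  induction w using List.reverseRecOn with
  | nil => simp [pn]
  | append_singleton w i ih =>
    rw [List.length_append, List.length_singleton]
    unfold pn
    have h1 : 0 < pTrans sim m w (w ++ [i]) := by
      unfold pTrans
      rw [if_pos ⟨w, i, hsim.refl w, rfl⟩]
      exact div_pos (mW_pos hm _) (massCl_pos hsim hlen hm w)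
    refine lt_of_lt_of_le (mul_pos ih h1)
      (single_le_finsum (f := fun u => pn sim m w.length [] u * pTrans sim m u (w ++ [i])) w ?_ ?_)
    · refine (fin_len w.length).subset fun u hu => ?_
      have h2 : pTrans sim m u (w ++ [i]) ≠ 0 := right_ne_zero_of_mul hu
      unfold pTrans at h2
      split_ifs at h2 with h
      · obtain ⟨v, j, hv, he⟩ := h
        have := congrArg List.length he
        have h3 := hlen _ _ hv
        simp at this
        show u.length = w.length
        omega
      · exact absurd rfl h2
    · intro u
      exact mul_nonneg (pn_nonneg hsim hlen hm _ _ u) (pTrans_nonneg hsim hlen hm u _)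

lemma green_zero {N : ℕ} (sim : Word N → Word N → Prop) (m : Fin N → ℝ) (u v : Word N)
    (h : v.length ≤ u.length) (hne : v ≠ u) : green sim m u v = 0 := by
  unfold green
  rw [Nat.sub_eq_zero_of_le h]
  simp [pn, hne]

/-- if `a(u) > 0` and `Σ_u a(u)/g(∅,u) < ∞`, then the series defining
`ρ` converges and `ρ` is a metric on `𝒲`. -/
theorem rho_is_metric {N : ℕ} (hN : 2 ≤ N)
    (sim : Word N → Word N → Prop) (hsim : Equivalence sim)
    (hlen : ∀ v w : Word N, sim v w → v.length = w.length)
    (m : Fin N → ℝ) (hm : ∀ a, m a ∈ Set.Ioo (0 : ℝ) 1)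
    (hm1 : ∑ a, m a = 1)
    (a : Word N → ℝ) (ha : ∀ u, 0 < a u)
    (hsumm : Summable fun u : Word N => a u / green sim m ([] : Word N) u) :
    (∀ v w : Word N,
      Summable fun u : Word N => a u * |mkernel sim m u v - mkernel sim m u w|) ∧
    (∀ v w : Word N, 0 ≤ rho sim m a v w) ∧
    (∀ v w : Word N, rho sim m a v w = 0 ↔ v = w) ∧
    (∀ v w : Word N, rho sim m a v w = rho sim m a w v) ∧
    (∀ v x w : Word N, rho sim m a v w ≤ rho sim m a v x + rho sim m a x w) := by
  have hS : ∀ v w : Word N,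
      Summable fun u : Word N => a u * |mkernel sim m u v - mkernel sim m u w| := by
    intro v w
    apply summable_of_hasFiniteSupport
    refine (List.finite_length_le (Fin N) (max v.length w.length)).subset fun u hu => ?_
    by_contra hc
    have hc' : max v.length w.length < u.length := by
      simpa using hc
    have hv : v.length < u.length := lt_of_le_of_lt (le_max_left _ _) hc'
    have hw : w.length < u.length := lt_of_le_of_lt (le_max_right _ _) hc'
    apply hu
    simp only [mkernel]
    rw [green_zero sim m u v hv.le (by rintro rfl; omega),
      green_zero sim m u w hw.le (by rintro rfl; omega)]
    simp
  have hnn : ∀ v w u : Word N, 0 ≤ a u * |mkernel sim m u v - mkernel sim m u w| :=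
    fun v w u => mul_nonneg (ha u).le (abs_nonneg _)
  have hsym : ∀ v w : Word N, rho sim m a v w = rho sim m a w v := by
    intro v w
    unfold rho
    simp only [abs_sub_comm]
  have key : ∀ v w : Word N, v.length ≤ w.length → rho sim m a v w = 0 → v = w := by
    intro v w hl h0
    by_contra hne
    have h1 := (hS v w).le_tsum w (fun u _ => hnn v w u)
    have h2 : a w * |mkernel sim m w v - mkernel sim m w w| ≤ 0 := h1.trans h0.le
    have h3 : mkernel sim m w v = 0 := by
      unfold mkernel
      rw [green_zero sim m w v hl hne, zero_div]
    have h4 : 0 < mkernel sim m w w := by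
      unfold mkernel
      apply div_pos
      · simp [green, pn]
      · simpa [green] using pn_pos hsim hlen hm w
    rw [h3, zero_sub, abs_neg, abs_of_pos h4] at h2
    exact absurd (mul_pos (ha w) h4) (not_lt.2 h2)
  refine ⟨hS, fun v w => tsum_nonneg (hnn v w), fun v w => ⟨fun h => ?_, ?_⟩, hsym, ?_⟩
  · rcases le_total v.length w.length with hl | hl
    · exact key v w hl h
    · exact (key w v hl (hsym v w ▸ h)).symm
  · rintro rfl
    simp [rho]
  · intro v x w
    unfold rho
    rw [← (hS v x).tsum_add (hS x w)]
    refine (hS v w).tsum_le_tsum (fun u => ?_) ((hS v x).add (hS x w))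
    rw [← mul_add]
    exact mul_le_mul_of_nonneg_left (abs_sub_le _ _ _) (ha u).le

end Martin
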